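/- Let A = ∑_{j,k=1}^{3} a_{jk}(x) ∂²_{x_j x_k} be a second-order operator on ℝ³ with a_{jk} = a_{kj} ∈ W^{1,∞}_loc(ℝ³) and A uniformly elliptic, i.e. there is λ > 0 with ∑_{j,k} a_{jk}(x) ξ_j ξ_k ≥ λ|ξ|² for all x and all ξ ∈ ℝ³. Then for every s₀, c̃ ∈ ℝ there exist β₀ ≥ 1, r₀ ∈ (0,1) and C > 0 such that for every β ≥ β₀, setting s = s₀ + c̃β, r = |x| and ψ(x) = exp(r^{−β}), and for every u ∈ C_c^∞(B_{r₀} ∖ {0}), one has β² ∫_{ℝ³} r^{−s−β−1} ψ² (|∇u|² + |u|²) dx ≤ C ∫_{ℝ³} r^{−s} ψ² |Au|² dx, where C is independent of β and u. -/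

import Mathlib

open MeasureTheory Real Set

noncomputable section

/-- `i`-th coordinate unit vector of `ℝ³`. -/
def e3 (i : Fin 3) : EuclideanSpace ℝ (Fin 3) := EuclideanSpace.single i 1

/-- Second partial derivative `∂²u/∂x_j ∂x_k` at `x`. -/
def pd2 (u : EuclideanSpace ℝ (Fin 3) → ℝ) (x : EuclideanSpace ℝ (Fin 3)) (j k : Fin 3) : ℝ :=
  fderiv ℝ (fun y => fderiv ℝ u y (e3 j)) x (e3 k)

/-!
Conjugate by the radial weight `W = exp φ` with `φ = -(s / 2) log r + r ^ (-β)`, so that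
`W ^ 2 = r ^ (-s) ψ ^ 2`, and write `w = W u`, `p = ∇w`. Then `W A u = S - T + R`, where `S`
collects the second-order part and the main potential, `T` is first-order, and `R` is an error.
Hence `(W A u) ^ 2 / 2 + S T ≥ -R ^ 2 / 2`, because the left side plus `R ^ 2 / 2` is half the sum
of `(S + R) ^ 2` and `(T - R) ^ 2`. The product `S T` is the divergence of a compactly supported
field minus a quadratic form in `(w, p)`. Strong convexity of `r ^ (-β)` gives this form a main part
of at least a multiple of `N β ^ 2 |p| ^ 2 + N ^ 3 β ^ 4 r ^ 2 w ^ 2`, with `N = r ^ (-β - 2)`. If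
`M` bounds the coefficients and their derivatives, then its other terms and `R ^ 2` are smaller by a
factor `M ^ 2 / β`, because `β ≤ r ^ (-β)` near `0`. Since the coefficients are only Lipschitz, so
is the field; by Rademacher's theorem it is differentiable almost everywhere, and its divergence
still integrates to zero.
-/

section Carleman

open Filter Topology
open scoped NNReal RealInnerProductSpace Gradient

section LipschitzDivergence

variable {F : Type*} [NormedAddCommGroup F]

lemma exists_lipschitzWith_of_hasCompactSupport {α : Type*} [PseudoMetricSpace α] [ProperSpace α]
    {f : α → F} (hf : LocallyLipschitz f) (hc : HasCompactSupport f) :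
    ∃ K, LipschitzWith K f := by
  obtain ⟨K, hK⟩ := hf.locallyLipschitzOn.exists_lipschitzOnWith_of_compact
    (hc.isCompact.cthickening (r := 1))
  obtain ⟨B, hB⟩ := hf.continuous.bounded_above_of_compact_support hc
  have hsub : tsupport f ⊆ Metric.cthickening 1 (tsupport f) :=
    Metric.self_subset_cthickening _
  have bound_of_mem : ∀ x ∈ tsupport f, ∀ y, dist (f x) (f y) ≤ max K B.toNNReal * dist x y := by
    intro x hx y
    by_cases hy : y ∈ Metric.cthickening 1 (tsupport f)
    · exact (hK.dist_le_mul x (hsub hx) y hy).trans (by gcongr; exact le_max_left _ _)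
    · have hfar : 1 ≤ dist x y := by
        by_contra! h
        exact hy (Metric.mem_cthickening_of_dist_le y x 1 _ hx (by rw [dist_comm]; exact h.le))
      have hfy : f y = 0 := image_eq_zero_of_notMem_tsupport fun h => hy (hsub h)
      calc dist (f x) (f y) = ‖f x‖ := by rw [hfy, dist_zero_right]
        _ ≤ max K B.toNNReal * 1 := by
          rw [mul_one]
          exact (hB x).trans ((le_coe_toNNReal B).trans (by exact_mod_cast le_max_right _ _))
        _ ≤ max K B.toNNReal * dist x y := by gcongr
  refine ⟨max K B.toNNReal, LipschitzWith.of_dist_le_mul fun x y => ?_⟩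
  by_cases hx : x ∈ tsupport f
  · exact_mod_cast bound_of_mem x hx y
  by_cases hy : y ∈ tsupport f
  · rw [dist_comm, dist_comm x]
    exact_mod_cast bound_of_mem y hy x
  · rw [image_eq_zero_of_notMem_tsupport hx, image_eq_zero_of_notMem_tsupport hy, dist_self]
    positivity

variable [NormedSpace ℝ F] [FiniteDimensional ℝ F]

/-- The trace as a continuous linear functional on the continuous endomorphisms of a
finite-dimensional space. -/
def traceL (F : Type*) [NormedAddCommGroup F] [NormedSpace ℝ F] [FiniteDimensional ℝ F] :
    (F →L[ℝ] F) →L[ℝ] ℝ :=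
  (LinearMap.trace ℝ F ∘ₗ ContinuousLinearMap.coeLM ℝ).toContinuousLinearMap

lemma traceL_apply (L : F →L[ℝ] F) : traceL F L = LinearMap.trace ℝ F L := rfl

lemma traceL_smulRight (φ : F →L[ℝ] ℝ) (v : F) : traceL F (φ.smulRight v) = φ v :=
  LinearMap.trace_smulRight _ _

/-- The divergence of a vector field `V`, i.e. the trace of its derivative; it is `0` at points
where `V` is not differentiable. -/
def divergence (V : F → F) (x : F) : ℝ := traceL F (fderiv ℝ V x)

lemma divergence_eq_zero_of_notMem_tsupport {V : F → F} {x : F} (hx : x ∉ tsupport V) :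
    divergence V x = 0 := by
  have h : V =ᶠ[𝓝 x] fun _ => 0 := notMem_tsupport_iff_eventuallyEq.1 hx
  simp [divergence, h.fderiv_eq]

lemma divergence_smul {f : F → ℝ} {f' : F →L[ℝ] ℝ} {V : F → F} {V' : F →L[ℝ] F} {x : F}
    (hf : HasFDerivAt f f' x) (hV : HasFDerivAt V V' x) :
    divergence (fun y => f y • V y) x = f x * traceL F V' + f' (V x) := by
  have h := hf.fun_smul hV
  rw [divergence, h.fderiv, map_add, map_smul, traceL_smulRight, smul_eq_mul]

lemma divergence_add {V W : F → F} {x : F} (hV : DifferentiableAt ℝ V x)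
    (hW : DifferentiableAt ℝ W x) :
    divergence (fun y => V y + W y) x = divergence V x + divergence W x := by
  rw [divergence, fderiv_fun_add hV hW, map_add, divergence, divergence]

variable [MeasurableSpace F] [BorelSpace F] {μ : Measure F} [μ.IsAddHaarMeasure]

lemma integrable_lineDeriv {f : F → ℝ} {K : ℝ≥0} (hf : LipschitzWith K f)
    (hc : HasCompactSupport f) (v : F) : Integrable (fun x => lineDeriv ℝ f x v) μ := by
  have hsupp : Function.support (fun x => lineDeriv ℝ f x v) ⊆ tsupport f := fun x hx => by
    by_contra h
    have h0 : f =ᶠ[𝓝 x] fun _ => 0 := notMem_tsupport_iff_eventuallyEq.1 h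
    exact hx (h0.lineDeriv_eq.trans (by simp [lineDeriv]))
  exact (integrableOn_iff_integrable_of_support_subset hsupp).1
    ((hf.locallyIntegrable_lineDeriv v).integrableOn_isCompact hc)

lemma integral_lineDeriv_eq_zero {f : F → ℝ} {K : ℝ≥0} (hf : LipschitzWith K f)
    (hc : HasCompactSupport f) (v : F) : ∫ x, lineDeriv ℝ f x v ∂μ = 0 := by
  have h := LipschitzWith.integral_lineDeriv_mul_eq (μ := μ)
    (LipschitzWith.const (1 : ℝ) (α := F)) hf hc (-v)
  simpa [lineDeriv] using h.symm

lemma divergence_ae_eq_sum_lineDeriv {ι : Type*} [Fintype ι] (b : Module.Basis ι ℝ F) {V : F → F}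
    {K : ℝ≥0} (hV : LipschitzWith K V) :
    divergence V =ᵐ[μ] fun x => ∑ i, lineDeriv ℝ (fun y => b.coord i (V y)) x (b i) := by
  classical
  filter_upwards [hV.ae_differentiableAt] with x hx
  have hcoord (i : ι) : lineDeriv ℝ (fun y => b.coord i (V y)) x (b i)
      = b.coord i (fderiv ℝ V x (b i)) :=
    (((b.coord i).toContinuousLinearMap.hasFDerivAt.comp x hx.hasFDerivAt).hasLineDerivAt
      (b i)).lineDeriv
  rw [divergence, traceL_apply, LinearMap.trace_eq_matrix_trace ℝ b, Matrix.trace]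
  refine Finset.sum_congr rfl fun i _ => ?_
  rw [hcoord, Matrix.diag_apply, LinearMap.toMatrix_apply, Module.Basis.coord_apply,
    ContinuousLinearMap.coe_coe]

theorem integrable_divergence_and_integral_eq_zero {V : F → F} {K : ℝ≥0} (hV : LipschitzWith K V)
    (hc : HasCompactSupport V) :
    Integrable (divergence V) μ ∧ ∫ x, divergence V x ∂μ = 0 := by
  let b := Module.finBasis ℝ F
  have hlip (i) : ∃ L, LipschitzWith L fun y => b.coord i (V y) :=
    ⟨_, (b.coord i).toContinuousLinearMap.lipschitz.comp hV⟩
  have hcomp (i) : HasCompactSupport fun y => b.coord i (V y) :=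
    hc.comp_left (map_zero (b.coord i))
  have hint (i) : Integrable (fun x => lineDeriv ℝ (fun y => b.coord i (V y)) x (b i)) μ :=
    integrable_lineDeriv (hlip i).choose_spec (hcomp i) (b i)
  have hdiv := divergence_ae_eq_sum_lineDeriv (μ := μ) b hV
  refine ⟨(integrable_finsetSum _ fun i _ => hint i).congr hdiv.symm, ?_⟩
  rw [integral_congr_ae hdiv, integral_finsetSum _ fun i _ => hint i]
  exact Finset.sum_eq_zero fun i _ =>
    integral_lineDeriv_eq_zero (hlip i).choose_spec (hcomp i) (b i)

end LipschitzDivergence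

section CarlemanFlux

variable {E : Type*} [NormedAddCommGroup E] [InnerProductSpace ℝ E]

/-- The first-order part `T` of the conjugated operator, for a weight `W` with `∇W = W G x` and
`∇G = H x`. Here `w` and `p` stand for the values at `x` of a function and of its gradient. -/
def carlemanMultiplier (A : E →L[ℝ] E) (G H w : ℝ) (x p : E) : ℝ :=
  2 * G * ⟪p, A x⟫ + 2 * H * ⟪x, A x⟫ * w

/-- The vector field whose divergence is the product `S T` of the two parts of the conjugated
operator, up to `carlemanRemainder`. It has no derivatives of the coefficients in it, so it is
Lipschitz when they are. -/
def carlemanFlux (A : E →L[ℝ] E) (G H w : ℝ) (x p : E) : E :=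
  carlemanMultiplier A G H w x p • A p +
    (G ^ 3 * ⟪x, A x⟫ * w ^ 2 - G * ⟪p, A p⟫) • A x

lemma hasFDerivAt_inner_clm_apply {A : E → E →L[ℝ] E} {D : E →L[ℝ] E →L[ℝ] E} {X Y : E → E}
    {X' Y' : E →L[ℝ] E} {x : E} (hA : HasFDerivAt A D x) (hsymm : (A x).IsSymmetric)
    (hX : HasFDerivAt X X' x) (hY : HasFDerivAt Y Y' x) :
    HasFDerivAt (fun z => ⟪X z, A z (Y z)⟫)
      (innerSL ℝ (A x (X x)) ∘L Y' + innerSL ℝ (A x (Y x)) ∘L X' +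
        innerSL ℝ (X x) ∘L D.flip (Y x)) x := by
  refine (hX.inner ℝ (hA.clm_apply hY)).congr_fderiv ?_
  ext v
  have h : ⟪X x, A x (Y' v)⟫ = ⟪A x (X x), Y' v⟫ := (hsymm _ _).symm
  simp only [ContinuousLinearMap.comp_apply, ContinuousLinearMap.prod_apply, add_apply,
    ContinuousLinearMap.flip_apply, fderivInnerCLM_apply, inner_add_right, h, real_inner_comm,
    coe_innerSL_apply]
  ring

variable [FiniteDimensional ℝ E]

/-- The quadratic form in `(w, p)` by which the divergence of `carlemanFlux` exceeds `S T`. The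
argument `D` is the derivative of the coefficients `A` at `x`; the radial factors satisfy
`∇G = H x` and `∇H = K x`. -/
def carlemanRemainder (A : E →L[ℝ] E) (D : E →L[ℝ] E →L[ℝ] E) (G H K w : ℝ) (x p : E) : ℝ :=
  2 * H * ⟪p, A x⟫ ^ 2 + H * ⟪x, A x⟫ * ⟪p, A p⟫ + G ^ 2 * H * ⟪x, A x⟫ ^ 2 * w ^ 2
    + 2 * G * (‖A p‖ ^ 2 + ⟪p, D (A p) x⟫)
    - G * ⟪p, A p⟫ * (traceL E A + traceL E (D.flip x)) - G * ⟪p, D (A x) p⟫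
    + w * (2 * K * ⟪x, A x⟫ * ⟪p, A x⟫ + 2 * H * (2 * ⟪A x, A p⟫ + ⟪x, D (A p) x⟫))
    + w ^ 2 * G ^ 3 * (⟪x, A x⟫ * (traceL E A + traceL E (D.flip x)) + 2 * ‖A x‖ ^ 2
        + ⟪x, D (A x) x⟫)

theorem divergence_carlemanFlux {A : E → E →L[ℝ] E} {D : E →L[ℝ] E →L[ℝ] E} {G H w : E → ℝ}
    {K : ℝ} {p : E → E} {h : E →L[ℝ] E} {x : E}
    (hA : HasFDerivAt A D x) (hsymm : (A x).IsSymmetric)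
    (hG : HasGradientAt G (H x • x) x) (hH : HasGradientAt H (K • x) x)
    (hw : HasGradientAt w (p x) x) (hp : HasFDerivAt p h x) (hh : h.IsSymmetric) :
    divergence (fun z => carlemanFlux (A z) (G z) (H z) (w z) z (p z)) x =
      (traceL E (A x ∘L h) + traceL E (D.flip (p x)) + G x ^ 2 * ⟪x, A x x⟫ * w x) *
          carlemanMultiplier (A x) (G x) (H x) (w x) x (p x) +
        carlemanRemainder (A x) D (G x) (H x) K (w x) x (p x) := by
  have hid : HasFDerivAt (fun z : E => z) (ContinuousLinearMap.id ℝ E) x := hasFDerivAt_id x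
  have hγ := hasFDerivAt_inner_clm_apply hA hsymm hid hid
  have hZ := hasFDerivAt_inner_clm_apply hA hsymm hp hid
  have hB := hasFDerivAt_inner_clm_apply hA hsymm hp hp
  have hT := ((hG.hasFDerivAt.const_mul 2).mul hZ).add
    (((hH.hasFDerivAt.const_mul 2).mul hγ).mul hw.hasFDerivAt)
  have hc := (((hG.hasFDerivAt.pow 3).mul hγ).mul (hw.hasFDerivAt.pow 2)).sub
    (hG.hasFDerivAt.mul hB)
  have hP := hA.clm_apply hp
  have hy := hA.clm_apply hid
  have hflux := (divergence_add (hT.fun_smul hP).differentiableAt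
    (hc.fun_smul hy).differentiableAt).trans
    (congrArg₂ (· + ·) (divergence_smul hT hP) (divergence_smul hc hy))
  have hxP : ⟪x, A x (p x)⟫ = ⟪p x, A x x⟫ := by
    rw [real_inner_comm]; exact hsymm _ _
  have hhess : ⟪A x x, h (A x (p x))⟫ = ⟪A x (p x), h (A x x)⟫ := by
    rw [real_inner_comm]; exact hh _ _
  refine hflux.trans ?_
  simp only [carlemanMultiplier, carlemanRemainder, Pi.add_apply, Pi.sub_apply, Pi.mul_apply,
    map_add, ContinuousLinearMap.comp_id, add_apply, sub_apply, smul_apply,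
    ContinuousLinearMap.comp_apply, ContinuousLinearMap.flip_apply, innerSL_apply_apply,
    InnerProductSpace.toDual_apply_apply, inner_smul_left, hxP, hhess, smul_eq_mul,
    real_inner_self_eq_norm_sq, RCLike.conj_to_real]
  ring

end CarlemanFlux

section Conjugation

variable {E : Type*} [NormedAddCommGroup E] [InnerProductSpace ℝ E]

/-- The Hessian of `W u` at `x`, when `∇W = W G x`, `∇G = H x`, and `u` has value `u`, gradient
`g` and Hessian `h` at `x`. -/
def conjugatedHessian (W G H u : ℝ) (x g : E) (h : E →L[ℝ] E) : E →L[ℝ] E :=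
  W • (h + (u * G) • ContinuousLinearMap.id ℝ E
    + G • ((innerSL ℝ g).smulRight x + (innerSL ℝ x).smulRight g)
    + (u * (G ^ 2 + H)) • (innerSL ℝ x).smulRight x)

lemma isSymmetric_conjugatedHessian (W G H u : ℝ) (x g : E) {h : E →L[ℝ] E}
    (hh : h.IsSymmetric) : (conjugatedHessian W G H u x g h).IsSymmetric := fun v w => by
  have hvw : ⟪h v, w⟫ = ⟪v, h w⟫ := hh v w
  simp only [conjugatedHessian, ContinuousLinearMap.coe_coe, add_apply, smul_apply,
    ContinuousLinearMap.id_apply, ContinuousLinearMap.smulRight_apply, coe_innerSL_apply,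
    inner_add_left, inner_add_right, inner_smul_left, inner_smul_right, RCLike.conj_to_real, hvw,
    real_inner_comm]
  ring

variable [CompleteSpace E]

lemma gradient_eq_toDual_symm_comp (u : E → ℝ) :
    ∇ u = (InnerProductSpace.toDual ℝ E).symm ∘ fderiv ℝ u := rfl

lemma contDiffAt_gradient {u : E → ℝ} {x : E} (hu : ContDiffAt ℝ 2 u x) :
    ContDiffAt ℝ 1 (∇ u) x := by
  rw [gradient_eq_toDual_symm_comp]
  exact (InnerProductSpace.toDual ℝ E).symm.contDiff.contDiffAt.comp x
    (hu.fderiv_right (by norm_num))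

lemma inner_fderiv_gradient (u : E → ℝ) (x v w : E) :
    ⟪fderiv ℝ (∇ u) x v, w⟫ = fderiv ℝ (fderiv ℝ u) x v w := by
  rw [gradient_eq_toDual_symm_comp, LinearIsometryEquiv.comp_fderiv]
  exact InnerProductSpace.toDual_symm_apply

lemma isSymmetric_fderiv_gradient {u : E → ℝ} {x : E} (hu : ContDiffAt ℝ 2 u x) :
    (fderiv ℝ (∇ u) x).IsSymmetric := fun v w => by
  have h : IsSymmSndFDerivAt ℝ u x := hu.isSymmSndFDerivAt (by simp)
  rw [ContinuousLinearMap.coe_coe, inner_fderiv_gradient, real_inner_comm,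
    inner_fderiv_gradient, h v w]

/-- The gradient of `W u` when `∇W = W G x`, written without derivatives of `W`. -/
def conjugatedGradient (W G u : E → ℝ) (x : E) : E :=
  W x • (∇ u x + (u x * G x) • x)

lemma hasGradientAt_conjugate {W G u : E → ℝ} {x : E}
    (hW : HasGradientAt W ((W x * G x) • x) x) (hu : DifferentiableAt ℝ u x) :
    HasGradientAt (fun z => W z * u z) (conjugatedGradient W G u x) x := by
  rw [hasGradientAt_iff_hasFDerivAt]
  refine (hW.hasFDerivAt.fun_mul hu.hasGradientAt.hasFDerivAt).congr_fderiv ?_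
  ext v
  simp only [conjugatedGradient, toDual_gradient, map_add, map_smul, add_apply, smul_apply,
    smul_add, smul_eq_mul, InnerProductSpace.toDual_apply_apply]
  ring

lemma hasFDerivAt_conjugatedGradient {W G u : E → ℝ} {H : ℝ} {x : E}
    (hW : HasGradientAt W ((W x * G x) • x) x) (hG : HasGradientAt G (H • x) x)
    (hu : ContDiffAt ℝ 2 u x) :
    HasFDerivAt (conjugatedGradient W G u)
      (conjugatedHessian (W x) (G x) H (u x) x (∇ u x) (fderiv ℝ (∇ u) x)) x := by
  have hu₁ := (hu.differentiableAt (by norm_num)).hasGradientAt.hasFDerivAt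
  have hu₂ := ((contDiffAt_gradient hu).differentiableAt (by norm_num)).hasFDerivAt
  refine (hW.hasFDerivAt.fun_smul
    (hu₂.add ((hu₁.fun_mul hG.hasFDerivAt).fun_smul (hasFDerivAt_id x)))).congr_fderiv ?_
  ext v
  simp only [conjugatedHessian, map_smul, toDual_gradient, id_eq, smul_add, Pi.add_apply,
    add_apply, smul_apply, ContinuousLinearMap.id_apply, ContinuousLinearMap.smulRight_apply,
    InnerProductSpace.toDual_apply_apply, smul_eq_mul, coe_innerSL_apply, inner_gradient_left]
  module

end Conjugation

section Operator

variable {E : Type*} [NormedAddCommGroup E] [InnerProductSpace ℝ E] [FiniteDimensional ℝ E]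

/-- The operator `∑ a_{jk} ∂²_{jk}` in nondivergence form, written without coordinates as the trace
of `A` times the Hessian. -/
def secondOrderOperator (A : E → E →L[ℝ] E) (u : E → ℝ) (x : E) : ℝ :=
  traceL E (A x ∘L fderiv ℝ (∇ u) x)

/-- The part `R` of the conjugated operator `S - T + R` that is estimated as an error, with symbols
as in `carlemanRemainder`. -/
def carlemanLowerOrder (A : E →L[ℝ] E) (D : E →L[ℝ] E →L[ℝ] E) (G H w : ℝ) (x p : E) : ℝ :=
  (H * ⟪x, A x⟫ - G * traceL E A) * w - traceL E (D.flip p)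

lemma traceL_comp_conjugatedHessian (A : E →L[ℝ] E) (hA : A.IsSymmetric) (W G H u : ℝ) (x g : E)
    (h : E →L[ℝ] E) :
    traceL E (A ∘L conjugatedHessian W G H u x g h) =
      W * (traceL E (A ∘L h) + u * G * traceL E A + 2 * G * ⟪g, A x⟫
        + u * (G ^ 2 + H) * ⟪x, A x⟫) := by
  have hcomp (φ : E →L[ℝ] ℝ) (v : E) : A ∘L φ.smulRight v = φ.smulRight (A v) := by
    ext; simp
  have hxg : ⟪x, A g⟫ = ⟪g, A x⟫ := by
    rw [real_inner_comm]; exact hA _ _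
  simp only [conjugatedHessian, ContinuousLinearMap.comp_add, ContinuousLinearMap.comp_smul,
    map_add, map_smul, hcomp, traceL_smulRight, ContinuousLinearMap.comp_id, innerSL_apply_apply,
    smul_eq_mul, hxg]
  ring

theorem sub_le_sq_add_divergence_carlemanFlux {A : E → E →L[ℝ] E} {D : E →L[ℝ] E →L[ℝ] E}
    {W G H u : E → ℝ} {K : ℝ} {x : E}
    (hA : HasFDerivAt A D x) (hsymm : (A x).IsSymmetric)
    (hW : HasGradientAt W ((W x * G x) • x) x)
    (hG : HasGradientAt G (H x • x) x) (hH : HasGradientAt H (K • x) x)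
    (hu : ContDiffAt ℝ 2 u x) :
    carlemanRemainder (A x) D (G x) (H x) K (W x * u x) x (conjugatedGradient W G u x)
        - carlemanLowerOrder (A x) D (G x) (H x) (W x * u x) x (conjugatedGradient W G u x) ^ 2 / 2
      ≤ (W x * secondOrderOperator A u x) ^ 2 / 2 +
        divergence (fun z => carlemanFlux (A z) (G z) (H z) (W z * u z) z
          (conjugatedGradient W G u z)) x := by
  set p := conjugatedGradient W G u x with hp
  set h := conjugatedHessian (W x) (G x) (H x) (u x) x (∇ u x) (fderiv ℝ (∇ u) x) with hh
  rw [divergence_carlemanFlux hA hsymm hG hH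
    (hasGradientAt_conjugate hW (hu.differentiableAt (by norm_num)))
    (hasFDerivAt_conjugatedGradient hW hG hu)
    (isSymmetric_conjugatedHessian _ _ _ _ _ _ (isSymmetric_fderiv_gradient hu)), ← hp, ← hh]
  set S := traceL E (A x ∘L h) + traceL E (D.flip p) + G x ^ 2 * ⟪x, A x x⟫ * (W x * u x) with hS
  set T := carlemanMultiplier (A x) (G x) (H x) (W x * u x) x p with hT
  set R := carlemanLowerOrder (A x) D (G x) (H x) (W x * u x) x p with hR
  have hsplit : W x * secondOrderOperator A u x = S - T + R := by
    rw [hS, hT, hR, hh, traceL_comp_conjugatedHessian _ hsymm]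
    simp only [secondOrderOperator, carlemanMultiplier, carlemanLowerOrder, hp,
      conjugatedGradient, inner_smul_left, inner_add_left, RCLike.conj_to_real]
    ring
  rw [hsplit]
  linarith [sq_nonneg (S + R), sq_nonneg (T - R)]

end Operator

section LowerBound

variable {E : Type*} [NormedAddCommGroup E] [InnerProductSpace ℝ E]

lemma abs_inner_apply_le {L : E →L[ℝ] E} {M : ℝ} (hL : ‖L‖ ≤ M) (v w : E) :
    |⟪v, L w⟫| ≤ M * (‖v‖ * ‖w‖) := by
  calc |⟪v, L w⟫| ≤ ‖v‖ * (M * ‖w‖) :=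
        (abs_real_inner_le_norm _ _).trans (by gcongr; exact L.le_of_opNorm_le hL w)
    _ = M * (‖v‖ * ‖w‖) := by ring

variable [FiniteDimensional ℝ E]

/-- Ellipticity of the coefficient matrix `A` at a point with constant `lam`, and a common bound `M`
for `A`, its derivative `D` and the traces of both. -/
structure CoefficientBounds (A : E →L[ℝ] E) (D : E →L[ℝ] E →L[ℝ] E) (lam M : ℝ) : Prop where
  coercive : ∀ v, lam * ‖v‖ ^ 2 ≤ ⟪v, A v⟫
  norm_le : ‖A‖ ≤ M
  norm_deriv_le : ‖D‖ ≤ M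
  abs_trace_le : |traceL E A| ≤ M
  abs_trace_deriv_le : ∀ v, |traceL E (D.flip v)| ≤ M * ‖v‖

variable {A : E →L[ℝ] E} {D : E →L[ℝ] E →L[ℝ] E} {lam M G H K w : ℝ} {x p : E}

namespace CoefficientBounds

lemma nonneg (h : CoefficientBounds A D lam M) : 0 ≤ M := (norm_nonneg A).trans h.norm_le

lemma abs_inner_le (h : CoefficientBounds A D lam M) (u v : E) :
    |⟪u, A v⟫| ≤ M * (‖u‖ * ‖v‖) :=
  abs_inner_apply_le h.norm_le u v

lemma norm_apply_le (h : CoefficientBounds A D lam M) (v : E) : ‖A v‖ ≤ M * ‖v‖ :=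
  A.le_of_opNorm_le h.norm_le v

lemma abs_inner_deriv_le (h : CoefficientBounds A D lam M) (u v w : E) :
    |⟪u, D (A v) w⟫| ≤ M ^ 2 * (‖v‖ * ‖u‖ * ‖w‖) := by
  have hM := h.nonneg
  have hD : ‖D (A v)‖ ≤ M * (M * ‖v‖) :=
    (D.le_of_opNorm_le h.norm_deriv_le _).trans (by gcongr; exact h.norm_apply_le v)
  exact (abs_inner_apply_le hD u w).trans_eq (by ring)

lemma abs_trace_add_le (h : CoefficientBounds A D lam M) (hx : ‖x‖ ≤ 1) :
    |traceL E A + traceL E (D.flip x)| ≤ 2 * M := by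
  have hM := h.nonneg
  calc _ ≤ M + M * ‖x‖ :=
        (abs_add_le _ _).trans (add_le_add h.abs_trace_le (h.abs_trace_deriv_le x))
    _ ≤ M + M * 1 := by gcongr
    _ = 2 * M := by ring

lemma le_quadratic_terms (h : CoefficientBounds A D lam M) (hlam : 0 < lam) (hH : 0 ≤ H) :
    lam ^ 2 * (H * ‖x‖ ^ 2) * ‖p‖ ^ 2 + lam ^ 2 * G ^ 2 * (H * ‖x‖ ^ 2) * ‖x‖ ^ 2 * w ^ 2 ≤
      2 * H * ⟪p, A x⟫ ^ 2 + H * ⟪x, A x⟫ * ⟪p, A p⟫ + G ^ 2 * H * ⟪x, A x⟫ ^ 2 * w ^ 2 := by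
  have hx : 0 ≤ ⟪x, A x⟫ := le_trans (by positivity) (h.coercive x)
  have hp : lam ^ 2 * (H * ‖x‖ ^ 2) * ‖p‖ ^ 2 ≤ H * ⟪x, A x⟫ * ⟪p, A p⟫ := by
    calc _ = H * (lam * ‖x‖ ^ 2) * (lam * ‖p‖ ^ 2) := by ring
      _ ≤ _ := by gcongr; exacts [h.coercive x, h.coercive p]
  have hw : lam ^ 2 * G ^ 2 * (H * ‖x‖ ^ 2) * ‖x‖ ^ 2 * w ^ 2 ≤
      G ^ 2 * H * ⟪x, A x⟫ ^ 2 * w ^ 2 := by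
    calc _ = G ^ 2 * H * (lam * ‖x‖ ^ 2) ^ 2 * w ^ 2 := by ring
      _ ≤ _ := by gcongr; exact h.coercive x
  have hZ : 0 ≤ 2 * H * ⟪p, A x⟫ ^ 2 := by positivity
  linarith

lemma abs_gradient_terms_le (h : CoefficientBounds A D lam M) (hx : ‖x‖ ≤ 1) :
    |2 * G * (‖A p‖ ^ 2 + ⟪p, D (A p) x⟫)
        - G * ⟪p, A p⟫ * (traceL E A + traceL E (D.flip x)) - G * ⟪p, D (A x) p⟫| ≤
      7 * M ^ 2 * |G| * ‖p‖ ^ 2 := by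
  have hM := h.nonneg
  have hP : |‖A p‖ ^ 2| ≤ M ^ 2 * ‖p‖ ^ 2 := by
    rw [abs_of_nonneg (by positivity), ← mul_pow]
    gcongr
    exact h.norm_apply_le p
  have hBtr : |⟪p, A p⟫ * (traceL E A + traceL E (D.flip x))| ≤ M * (‖p‖ * ‖p‖) * (2 * M) := by
    rw [abs_mul]
    gcongr
    exacts [h.abs_inner_le p p, h.abs_trace_add_le hx]
  have hsum : |2 * (‖A p‖ ^ 2 + ⟪p, D (A p) x⟫)
      - ⟪p, A p⟫ * (traceL E A + traceL E (D.flip x)) - ⟪p, D (A x) p⟫| ≤ 7 * M ^ 2 * ‖p‖ ^ 2 := by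
    have hr : M ^ 2 * ‖p‖ ^ 2 * ‖x‖ ≤ M ^ 2 * ‖p‖ ^ 2 * 1 := by gcongr
    have hDp := abs_le.1 (h.abs_inner_deriv_le p p x)
    have hDx := abs_le.1 (h.abs_inner_deriv_le p x p)
    rw [abs_le] at hP hBtr ⊢
    constructor <;> linarith
  calc _ = |G| * |2 * (‖A p‖ ^ 2 + ⟪p, D (A p) x⟫)
      - ⟪p, A p⟫ * (traceL E A + traceL E (D.flip x)) - ⟪p, D (A x) p⟫| := by
        rw [← abs_mul]; ring_nf
    _ ≤ |G| * (7 * M ^ 2 * ‖p‖ ^ 2) := by gcongr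
    _ = _ := by ring

lemma abs_mixed_terms_le (h : CoefficientBounds A D lam M) (hx : ‖x‖ ≤ 1) (hH : 0 ≤ H) :
    |w * (2 * K * ⟪x, A x⟫ * ⟪p, A x⟫ + 2 * H * (2 * ⟪A x, A p⟫ + ⟪x, D (A p) x⟫))| ≤
      M ^ 2 * (2 * |K| * ‖x‖ ^ 3 + 6 * H * ‖x‖) * (|w| * ‖p‖) := by
  have hM := h.nonneg
  have hK : |2 * K * ⟪x, A x⟫ * ⟪p, A x⟫| ≤ 2 * |K| * (M * (‖x‖ * ‖x‖)) * (M * (‖p‖ * ‖x‖)) := by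
    rw [abs_mul, abs_mul, abs_mul, abs_two]
    gcongr
    exacts [h.abs_inner_le x x, h.abs_inner_le p x]
  have hyP : |⟪A x, A p⟫| ≤ M * ‖x‖ * (M * ‖p‖) :=
    (abs_real_inner_le_norm _ _).trans (by gcongr <;> exact h.norm_apply_le _)
  have hHsum : |2 * ⟪A x, A p⟫ + ⟪x, D (A p) x⟫| ≤ 3 * M ^ 2 * (‖x‖ * ‖p‖) := by
    have hr : M ^ 2 * (‖p‖ * ‖x‖) * ‖x‖ ≤ M ^ 2 * (‖p‖ * ‖x‖) * 1 := by gcongr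
    have hD := abs_le.1 (h.abs_inner_deriv_le x p x)
    rw [abs_le] at hyP ⊢
    constructor <;> linarith
  calc _ ≤ |w| * (|2 * K * ⟪x, A x⟫ * ⟪p, A x⟫| + 2 * H * |2 * ⟪A x, A p⟫ + ⟪x, D (A p) x⟫|) := by
        rw [abs_mul]
        gcongr
        refine (abs_add_le _ _).trans_eq ?_
        rw [abs_mul (2 * H), abs_of_nonneg (by positivity : 0 ≤ 2 * H)]
    _ ≤ |w| * (2 * |K| * (M * (‖x‖ * ‖x‖)) * (M * (‖p‖ * ‖x‖)) +
          2 * H * (3 * M ^ 2 * (‖x‖ * ‖p‖))) := by gcongr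
    _ = _ := by ring

lemma abs_zeroth_order_terms_le (h : CoefficientBounds A D lam M) (hx : ‖x‖ ≤ 1) :
    |w ^ 2 * G ^ 3 * (⟪x, A x⟫ * (traceL E A + traceL E (D.flip x)) + 2 * ‖A x‖ ^ 2
        + ⟪x, D (A x) x⟫)| ≤ 5 * M ^ 2 * |G| ^ 3 * ‖x‖ ^ 2 * w ^ 2 := by
  have hM := h.nonneg
  have hγ : |⟪x, A x⟫ * (traceL E A + traceL E (D.flip x))| ≤ M * (‖x‖ * ‖x‖) * (2 * M) := by
    rw [abs_mul]
    gcongr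
    exacts [h.abs_inner_le x x, h.abs_trace_add_le hx]
  have hy : |‖A x‖ ^ 2| ≤ M ^ 2 * ‖x‖ ^ 2 := by
    rw [abs_of_nonneg (by positivity), ← mul_pow]
    gcongr
    exact h.norm_apply_le x
  have hsum : |⟪x, A x⟫ * (traceL E A + traceL E (D.flip x)) + 2 * ‖A x‖ ^ 2 + ⟪x, D (A x) x⟫| ≤
      5 * M ^ 2 * ‖x‖ ^ 2 := by
    have hr : M ^ 2 * (‖x‖ * ‖x‖) * ‖x‖ ≤ M ^ 2 * (‖x‖ * ‖x‖) * 1 := by gcongr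
    have hD := abs_le.1 (h.abs_inner_deriv_le x x x)
    rw [abs_le] at hγ hy ⊢
    constructor <;> linarith
  rw [abs_mul, abs_mul, abs_pow, abs_pow, sq_abs]
  calc _ ≤ w ^ 2 * |G| ^ 3 * (5 * M ^ 2 * ‖x‖ ^ 2) := by gcongr
    _ = _ := by ring

lemma le_carlemanRemainder (h : CoefficientBounds A D lam M) (hlam : 0 < lam) (hx : ‖x‖ ≤ 1)
    (hH : 0 ≤ H) :
    lam ^ 2 * (H * ‖x‖ ^ 2) * ‖p‖ ^ 2 + lam ^ 2 * G ^ 2 * (H * ‖x‖ ^ 2) * ‖x‖ ^ 2 * w ^ 2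
        - 7 * M ^ 2 * |G| * ‖p‖ ^ 2 - M ^ 2 * (2 * |K| * ‖x‖ ^ 3 + 6 * H * ‖x‖) * (|w| * ‖p‖)
        - 5 * M ^ 2 * |G| ^ 3 * ‖x‖ ^ 2 * w ^ 2 ≤
      carlemanRemainder A D G H K w x p := by
  rw [carlemanRemainder]
  linarith [h.le_quadratic_terms (G := G) (w := w) (x := x) (p := p) hlam hH,
    (abs_le.1 (h.abs_gradient_terms_le (G := G) (p := p) hx)).1,
    (abs_le.1 (h.abs_mixed_terms_le (K := K) (w := w) (p := p) hx hH)).1,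
    (abs_le.1 (h.abs_zeroth_order_terms_le (G := G) (w := w) hx)).1]

lemma abs_carlemanLowerOrder_le (h : CoefficientBounds A D lam M) (hH : 0 ≤ H) :
    |carlemanLowerOrder A D G H w x p| ≤ M * ((H * ‖x‖ ^ 2 + |G|) * |w| + ‖p‖) := by
  have hcoeff : |H * ⟪x, A x⟫ - G * traceL E A| ≤ H * (M * (‖x‖ * ‖x‖)) + |G| * M := by
    refine (abs_sub _ _).trans ?_
    rw [abs_mul, abs_mul, abs_of_nonneg hH]
    gcongr
    exacts [h.abs_inner_le x x, h.abs_trace_le]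
  calc _ ≤ |H * ⟪x, A x⟫ - G * traceL E A| * |w| + |traceL E (D.flip p)| := by
        rw [← abs_mul]; exact abs_sub _ _
    _ ≤ (H * (M * (‖x‖ * ‖x‖)) + |G| * M) * |w| + M * ‖p‖ := by
        gcongr; exact h.abs_trace_deriv_le p
    _ = _ := by ring

end CoefficientBounds

end LowerBound

/-- Size of the radial factors of a Carleman weight `exp φ` at distance `r` from the origin: `G`,
`H` and `K` stand for the first three iterates of `r⁻¹ d/dr` on `φ`, and `N` for `r ^ (-β - 2)`. -/
structure PhaseBounds (β N r G H K : ℝ) : Prop where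
  one_le_exponent : 1 ≤ β
  one_le_scale : 1 ≤ N
  snd_nonneg : 0 ≤ H
  le_mul_sq : β ≤ N * r ^ 2
  le_abs_fst : N * β / 2 ≤ |G|
  abs_fst_le : |G| ≤ 2 * N * β
  le_snd : N * β ^ 2 ≤ H * r ^ 2
  snd_le : H * r ^ 2 ≤ 4 * N * β ^ 2
  abs_trd_le : |K| * r ^ 4 ≤ 20 * N * β ^ 3

namespace PhaseBounds

variable {β N r G H K κ M q w : ℝ}

lemma le_quadratic_part (h : PhaseBounds β N r G H K) (lam : ℝ) :
    lam ^ 2 * (N * β ^ 2 * q ^ 2) + lam ^ 2 / 4 * (N ^ 3 * β ^ 4 * r ^ 2 * w ^ 2) ≤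
      lam ^ 2 * (H * r ^ 2) * q ^ 2 + lam ^ 2 * G ^ 2 * (H * r ^ 2) * r ^ 2 * w ^ 2 := by
  have hN := zero_le_one.trans h.one_le_scale
  have hβ := h.one_le_exponent
  have hG : (N * β / 2) ^ 2 ≤ G ^ 2 := by
    rw [← sq_abs G]
    gcongr
    exact h.le_abs_fst
  have hp : lam ^ 2 * (N * β ^ 2 * q ^ 2) ≤ lam ^ 2 * (H * r ^ 2) * q ^ 2 := by
    rw [← mul_assoc]
    exact mul_le_mul_of_nonneg_right (mul_le_mul_of_nonneg_left h.le_snd (sq_nonneg _))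
      (sq_nonneg _)
  have hw : lam ^ 2 / 4 * (N ^ 3 * β ^ 4 * r ^ 2 * w ^ 2) ≤
      lam ^ 2 * G ^ 2 * (H * r ^ 2) * r ^ 2 * w ^ 2 := by
    calc _ = lam ^ 2 * (N * β / 2) ^ 2 * (N * β ^ 2) * r ^ 2 * w ^ 2 := by ring
      _ ≤ lam ^ 2 * G ^ 2 * (N * β ^ 2) * r ^ 2 * w ^ 2 := by
          gcongr
      _ ≤ _ := by
          gcongr ?_ * _ * _
          exact mul_le_mul_of_nonneg_left h.le_snd (by positivity)
  exact add_le_add hp hw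

lemma gradient_error_le (h : PhaseBounds β N r G H K) (hM : M ^ 2 ≤ κ * β) :
    7 * M ^ 2 * |G| * q ^ 2 ≤ 14 * κ * (N * β ^ 2 * q ^ 2) := by
  calc _ ≤ 7 * (κ * β) * (2 * N * β) * q ^ 2 := by
        have hκβ : 0 ≤ κ * β := (sq_nonneg M).trans hM
        gcongr
        exact h.abs_fst_le
    _ = _ := by ring

lemma zeroth_order_error_le (h : PhaseBounds β N r G H K) (hM : M ^ 2 ≤ κ * β) :
    5 * M ^ 2 * |G| ^ 3 * r ^ 2 * w ^ 2 ≤ 40 * κ * (N ^ 3 * β ^ 4 * r ^ 2 * w ^ 2) := by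
  calc _ ≤ 5 * (κ * β) * (2 * N * β) ^ 3 * r ^ 2 * w ^ 2 := by
        have hκβ : 0 ≤ κ * β := (sq_nonneg M).trans hM
        gcongr
        exact h.abs_fst_le
    _ = _ := by ring

lemma mixed_error_le (h : PhaseBounds β N r G H K) (hr : 0 ≤ r) (hq : 0 ≤ q)
    (hκ : 0 ≤ κ) (hM : M ^ 2 ≤ κ * β) :
    M ^ 2 * (2 * |K| * r ^ 3 + 6 * H * r) * (|w| * q) ≤
      32 * κ * (N * β ^ 2 * q ^ 2 + N ^ 3 * β ^ 4 * r ^ 2 * w ^ 2) := by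
  have hN := zero_le_one.trans h.one_le_scale
  have hβ := h.one_le_exponent
  have hH := h.snd_nonneg
  have hcoeff : β * (2 * |K| * r ^ 3 + 6 * H * r) ≤ 64 * N ^ 2 * β ^ 3 * r := by
    calc β * (2 * |K| * r ^ 3 + 6 * H * r) ≤ N * r ^ 2 * (2 * |K| * r ^ 3 + 6 * H * r) := by
          gcongr; exact h.le_mul_sq
      _ = N * r * (2 * (|K| * r ^ 4) + 6 * (H * r ^ 2)) := by ring
      _ ≤ N * r * (2 * (20 * N * β ^ 3) + 6 * (4 * N * β ^ 2 * β)) := by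
          have hK := h.abs_trd_le
          have hHr := h.snd_le.trans (le_mul_of_one_le_right (by positivity) hβ)
          exact mul_le_mul_of_nonneg_left (by linarith) (by positivity)
      _ = 64 * N ^ 2 * β ^ 3 * r := by ring
  have hyoung : 2 * (N * β * r * |w|) * q ≤ (N * β * r * |w|) ^ 2 + q ^ 2 := two_mul_le_add_sq _ _
  calc _ ≤ κ * β * (2 * |K| * r ^ 3 + 6 * H * r) * (|w| * q) := by gcongr
    _ = κ * (β * (2 * |K| * r ^ 3 + 6 * H * r)) * (|w| * q) := by ring
    _ ≤ κ * (64 * N ^ 2 * β ^ 3 * r) * (|w| * q) := by gcongr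
    _ = 32 * κ * (N * β ^ 2) * (2 * (N * β * r * |w|) * q) := by ring
    _ ≤ 32 * κ * (N * β ^ 2) * ((N * β * r * |w|) ^ 2 + q ^ 2) := by gcongr
    _ = _ := by rw [mul_pow _ |w|, sq_abs]; ring

lemma lower_order_error_le (h : PhaseBounds β N r G H K) (hq : 0 ≤ q)
    (hκ : 0 ≤ κ) (hM : M ^ 2 ≤ κ * β) :
    (M * ((H * r ^ 2 + |G|) * |w| + q)) ^ 2 / 2 ≤
      κ * (N * β ^ 2 * q ^ 2) + 36 * κ * (N ^ 3 * β ^ 4 * r ^ 2 * w ^ 2) := by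
  have hN := zero_le_one.trans h.one_le_scale
  have hβ := h.one_le_exponent
  have hcoeff : H * r ^ 2 + |G| ≤ 6 * N * β ^ 2 := by
    have hββ : N * β ≤ N * β ^ 2 := by gcongr; exact le_self_pow₀ hβ two_ne_zero
    linarith [h.snd_le, h.abs_fst_le]
  have hw : (6 * N * β ^ 2) ^ 2 * β * w ^ 2 ≤ 36 * (N ^ 3 * β ^ 4 * r ^ 2 * w ^ 2) := by
    calc _ ≤ (6 * N * β ^ 2) ^ 2 * (N * r ^ 2) * w ^ 2 := by gcongr; exact h.le_mul_sq
      _ = _ := by ring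
  have hq' : β * q ^ 2 ≤ N * β ^ 2 * q ^ 2 := by
    gcongr
    nlinarith [h.one_le_scale]
  calc _ ≤ (M * (6 * N * β ^ 2 * |w| + q)) ^ 2 / 2 := by
        have hH := h.snd_nonneg
        rw [mul_pow, mul_pow]
        gcongr
    _ = M ^ 2 * ((6 * N * β ^ 2 * |w| + q) ^ 2 / 2) := by ring
    _ ≤ κ * β * ((6 * N * β ^ 2) ^ 2 * w ^ 2 + q ^ 2) := by
        gcongr
        nlinarith [sq_nonneg (6 * N * β ^ 2 * |w| - q), sq_abs w]
    _ = κ * ((6 * N * β ^ 2) ^ 2 * β * w ^ 2 + β * q ^ 2) := by ring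
    _ ≤ κ * (36 * (N ^ 3 * β ^ 4 * r ^ 2 * w ^ 2) + N * β ^ 2 * q ^ 2) := by gcongr
    _ = _ := by ring

end PhaseBounds

section Positivity

variable {E : Type*} [NormedAddCommGroup E] [InnerProductSpace ℝ E] [FiniteDimensional ℝ E]

theorem le_carlemanRemainder_sub_carlemanLowerOrder_sq {A : E →L[ℝ] E} {D : E →L[ℝ] E →L[ℝ] E}
    {lam M β N G H K w : ℝ} {x p : E} (hA : CoefficientBounds A D lam M) (hlam : 0 < lam)
    (hx : ‖x‖ ≤ 1) (hφ : PhaseBounds β N ‖x‖ G H K) (hM : 1000 * M ^ 2 ≤ lam ^ 2 * β) :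
    lam ^ 2 / 8 * (N * β ^ 2 * ‖p‖ ^ 2 + N ^ 3 * β ^ 4 * ‖x‖ ^ 2 * w ^ 2) ≤
      carlemanRemainder A D G H K w x p - carlemanLowerOrder A D G H w x p ^ 2 / 2 := by
  have hκ : M ^ 2 ≤ lam ^ 2 / 1000 * β := by linarith
  have hκ0 : 0 ≤ lam ^ 2 / 1000 := by positivity
  have hR : carlemanLowerOrder A D G H w x p ^ 2 ≤
      (M * ((H * ‖x‖ ^ 2 + |G|) * |w| + ‖p‖)) ^ 2 :=
    sq_le_sq.2 ((hA.abs_carlemanLowerOrder_le hφ.snd_nonneg).trans (le_abs_self _))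
  have hN := zero_le_one.trans hφ.one_le_scale
  have hY : 0 ≤ lam ^ 2 * (N * β ^ 2 * ‖p‖ ^ 2) := by positivity
  have hX : 0 ≤ lam ^ 2 * (N ^ 3 * β ^ 4 * ‖x‖ ^ 2 * w ^ 2) := by positivity
  linarith [hA.le_carlemanRemainder (G := G) (K := K) (w := w) (p := p) hlam hx hφ.snd_nonneg,
    hφ.le_quadratic_part (q := ‖p‖) (w := w) lam, hφ.gradient_error_le (q := ‖p‖) hκ,
    hφ.mixed_error_le (w := w) (norm_nonneg x) (norm_nonneg p) hκ0 hκ,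
    hφ.zeroth_order_error_le (w := w) hκ,
    hφ.lower_order_error_le (w := w) (norm_nonneg p) hκ0 hκ]

end Positivity

section RadialWeight

/-- The radial profile `exp φ` of the conjugating weight, `φ = -(s / 2) log t + t ^ (-β)`, chosen so
that its square is `t ^ (-s) ψ ^ 2`. -/
def carlemanWeight (β s t : ℝ) : ℝ := t ^ (-s / 2) * exp (t ^ (-β))

/-- `t⁻¹ d/dt` applied to the exponent `φ = -(s / 2) log t + t ^ (-β)` of `carlemanWeight`. -/
def phase₁ (β s t : ℝ) : ℝ := (-β * t ^ (-β) + -(s / 2)) / t ^ 2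

/-- `t⁻¹ d/dt` applied to `phase₁`. -/
def phase₂ (β s t : ℝ) : ℝ := (β * (β + 2) * t ^ (-β) + s) / t ^ 4

/-- `t⁻¹ d/dt` applied to `phase₂`. -/
def phase₃ (β s t : ℝ) : ℝ := (-(β * (β + 2) * (β + 4)) * t ^ (-β) + -(4 * s)) / t ^ 6

variable {β s t : ℝ}

lemma hasDerivAt_rpow_neg_add_div_pow (c d : ℝ) (n : ℕ) (ht : 0 < t) :
    HasDerivAt (fun t => (c * t ^ (-β) + d) / t ^ n)
      ((-((β + n) * c) * t ^ (-β) + -(n * d)) / t ^ (n + 2) * t) t := by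
  have h := (((hasDerivAt_rpow_const (p := -β) (Or.inl ht.ne')).const_mul c).add_const d).div
    (hasDerivAt_pow n t) (pow_ne_zero n ht.ne')
  refine h.congr_deriv ?_
  rw [rpow_sub_one ht.ne']
  rcases n with _ | n
  · simp only [pow_zero, Nat.cast_zero, zero_tsub]
    field_simp
    ring
  · simp only [Nat.add_sub_cancel]
    field_simp
    ring

lemma hasDerivAt_phase₁ (ht : 0 < t) : HasDerivAt (phase₁ β s) (phase₂ β s t * t) t := by
  refine (hasDerivAt_rpow_neg_add_div_pow (-β) (-(s / 2)) 2 ht).congr_deriv ?_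
  rw [phase₂]; push_cast; ring

lemma hasDerivAt_phase₂ (ht : 0 < t) : HasDerivAt (phase₂ β s) (phase₃ β s t * t) t := by
  refine (hasDerivAt_rpow_neg_add_div_pow (β * (β + 2)) s 4 ht).congr_deriv ?_
  rw [phase₃]; push_cast; ring

lemma hasDerivAt_carlemanWeight (ht : 0 < t) :
    HasDerivAt (carlemanWeight β s) (carlemanWeight β s t * phase₁ β s t * t) t := by
  have h := (hasDerivAt_rpow_const (p := -s / 2) (Or.inl ht.ne')).mul
    (hasDerivAt_rpow_const (p := -β) (Or.inl ht.ne')).exp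
  refine h.congr_deriv ?_
  rw [carlemanWeight, phase₁, rpow_sub_one ht.ne', rpow_sub_one ht.ne']
  field_simp
  ring

lemma carlemanWeight_sq (ht : 0 < t) :
    carlemanWeight β s t ^ 2 = t ^ (-s) * exp (t ^ (-β)) ^ 2 := by
  rw [carlemanWeight, mul_pow, ← rpow_natCast (t ^ (-s / 2)), ← rpow_mul ht.le]
  norm_num

lemma le_rpow_neg (hβ : 1 ≤ β) (ht : 0 < t) (ht' : t ≤ 1 / 2) : β ≤ t ^ (-β) := by
  have htwo : 2 ≤ t⁻¹ := by
    rw [le_inv_comm₀ two_pos ht]; linarith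
  calc β ≤ 1 + β * 1 := by linarith
    _ ≤ (1 + 1) ^ β := one_add_mul_self_le_rpow_one_add (by norm_num) hβ
    _ ≤ t⁻¹ ^ β := by gcongr; linarith
    _ = t ^ (-β) := by rw [rpow_neg ht.le, inv_rpow ht.le]

lemma abs_phase₁ (β s : ℝ) (ht : 0 < t) :
    |phase₁ β s t| = |β * t ^ (-β) + s / 2| / t ^ 2 := by
  rw [phase₁, abs_div, abs_of_pos (by positivity : 0 < t ^ 2), ← abs_neg]
  ring_nf

lemma phase₂_mul_sq (β s : ℝ) (ht : 0 < t) :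
    phase₂ β s t * t ^ 2 = (β * (β + 2) * t ^ (-β) + s) / t ^ 2 := by
  rw [phase₂]
  field_simp

lemma abs_phase₃_mul_pow_four (β s : ℝ) (ht : 0 < t) :
    |phase₃ β s t| * t ^ 4 = |β * (β + 2) * (β + 4) * t ^ (-β) + 4 * s| / t ^ 2 := by
  rw [phase₃, abs_div, abs_of_pos (by positivity : 0 < t ^ 6), ← abs_neg]
  field_simp
  ring_nf

lemma phaseBounds (hβ : 1 ≤ β) (hs : |s| ≤ β ^ 2) (ht : 0 < t) (ht' : t ≤ 1 / 2) :
    PhaseBounds β (t ^ (-β) / t ^ 2) t (phase₁ β s t) (phase₂ β s t) (phase₃ β s t) := by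
  have hfst := abs_phase₁ β s ht
  have hsnd := phase₂_mul_sq β s ht
  have htrd := abs_phase₃_mul_pow_four β s ht
  have he := le_rpow_neg hβ ht ht'
  set e := t ^ (-β) with he_def
  obtain ⟨hs₁, hs₂⟩ := abs_le.1 hs
  have hβe : β ^ 2 ≤ β * e := by nlinarith
  have hβ2e : β * e ≤ β ^ 2 * e := by nlinarith
  have hβ3e : β ^ 2 * e ≤ β ^ 3 * e := by nlinarith
  rw [abs_of_nonneg (by linarith : 0 ≤ β * e + s / 2)] at hfst
  rw [abs_of_nonneg (by linarith : 0 ≤ β * (β + 2) * (β + 4) * e + 4 * s)] at htrd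
  refine ⟨hβ, ?_, ?_, ?_, ?_, ?_, ?_, ?_, ?_⟩
  · rw [one_le_div (by positivity)]
    nlinarith
  · rw [phase₂, ← he_def]
    exact div_nonneg (by nlinarith) (by positivity)
  · rw [div_mul_cancel₀ _ (by positivity)]
    exact he
  · rw [hfst, div_mul_eq_mul_div, div_right_comm]
    gcongr
    linarith
  · rw [hfst, mul_div_assoc', div_mul_eq_mul_div]
    gcongr
    linarith
  · rw [hsnd, div_mul_eq_mul_div]
    gcongr
    linarith
  · rw [hsnd, mul_div_assoc', div_mul_eq_mul_div]
    gcongr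
    linarith
  · rw [htrd, mul_div_assoc', div_mul_eq_mul_div]
    gcongr
    linarith

end RadialWeight

section RadialGradient

variable {E : Type*} [NormedAddCommGroup E] [InnerProductSpace ℝ E] [CompleteSpace E]

lemma hasGradientAt_comp_norm {f : ℝ → ℝ} {c : ℝ} {x : E} (hx : x ≠ 0)
    (hf : HasDerivAt f (c * ‖x‖) ‖x‖) : HasGradientAt (fun z => f ‖z‖) (c • x) x := by
  have hsq : HasFDerivAt (fun z : E => √(‖z‖ ^ 2)) _ x :=
    (hasStrictFDerivAt_norm_sq x).hasFDerivAt.sqrt (by positivity)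
  simp only [sqrt_sq (norm_nonneg _)] at hsq
  rw [hasGradientAt_iff_hasFDerivAt]
  refine (hf.comp_hasFDerivAt x hsq).congr_fderiv ?_
  ext v
  simp only [one_div, mul_inv_rev, smul_apply, coe_innerSL_apply, nsmul_eq_mul, Nat.cast_ofNat,
    smul_eq_mul, map_smul, InnerProductSpace.toDual_apply_apply]
  field_simp

end RadialGradient

section Pointwise

variable {E : Type*} [NormedAddCommGroup E] [InnerProductSpace ℝ E]

lemma PhaseBounds.sq_mul_le {β N G H K W u : ℝ} {x g : E} (h : PhaseBounds β N ‖x‖ G H K) :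
    W ^ 2 * (‖g‖ ^ 2 + u ^ 2) ≤
      2 * ‖W • (g + (u * G) • x)‖ ^ 2 + 9 * (N ^ 2 * β ^ 2 * ‖x‖ ^ 2 * (W * u) ^ 2) := by
  set p := W • (g + (u * G) • x) with hp
  have hβ := h.one_le_exponent
  have hN := h.one_le_scale
  have hG : (G * ‖x‖) ^ 2 ≤ 4 * (N ^ 2 * β ^ 2 * ‖x‖ ^ 2) := by
    calc (G * ‖x‖) ^ 2 = |G| ^ 2 * ‖x‖ ^ 2 := by rw [mul_pow, sq_abs]
      _ ≤ (2 * N * β) ^ 2 * ‖x‖ ^ 2 := by gcongr; exact h.abs_fst_le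
      _ = _ := by ring
  have hone : 1 ≤ N ^ 2 * β ^ 2 * ‖x‖ ^ 2 := by
    calc (1 : ℝ) ≤ N * β ^ 2 * (N * ‖x‖ ^ 2) :=
          one_le_mul_of_one_le_of_one_le (one_le_mul_of_one_le_of_one_le hN (one_le_pow₀ hβ))
            (hβ.trans h.le_mul_sq)
      _ = _ := by ring
  have hg : ‖W • g‖ ≤ ‖p‖ + |W * u| * |G * ‖x‖| := by
    calc ‖W • g‖ = ‖p - (W * u * G) • x‖ := by rw [hp]; congr 1; module
      _ ≤ ‖p‖ + ‖(W * u * G) • x‖ := norm_sub_le _ _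
      _ = _ := by rw [norm_smul _ x, norm_eq_abs, abs_mul, abs_mul G, abs_norm, mul_assoc]
  calc W ^ 2 * (‖g‖ ^ 2 + u ^ 2) = ‖W • g‖ ^ 2 + (W * u) ^ 2 * 1 := by
        rw [norm_smul, mul_pow, norm_eq_abs, sq_abs]; ring
    _ ≤ (‖p‖ + |W * u| * |G * ‖x‖|) ^ 2 + (W * u) ^ 2 * (N ^ 2 * β ^ 2 * ‖x‖ ^ 2) := by gcongr
    _ ≤ 2 * (‖p‖ ^ 2 + (|W * u| * |G * ‖x‖|) ^ 2) + (W * u) ^ 2 * (N ^ 2 * β ^ 2 * ‖x‖ ^ 2) := by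
        gcongr; exact add_sq_le
    _ = 2 * ‖p‖ ^ 2 + 2 * (W * u) ^ 2 * (G * ‖x‖) ^ 2
          + (W * u) ^ 2 * (N ^ 2 * β ^ 2 * ‖x‖ ^ 2) := by rw [mul_pow, sq_abs, sq_abs]; ring
    _ ≤ 2 * ‖p‖ ^ 2 + 2 * (W * u) ^ 2 * (4 * (N ^ 2 * β ^ 2 * ‖x‖ ^ 2))
          + (W * u) ^ 2 * (N ^ 2 * β ^ 2 * ‖x‖ ^ 2) := by gcongr
    _ = _ := by ring

lemma PhaseBounds.weighted_sq_le {β N G H K W u : ℝ} {x g : E} (h : PhaseBounds β N ‖x‖ G H K)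
    (hx : ‖x‖ ≤ 1) :
    β ^ 2 * (N * ‖x‖ * W ^ 2 * (‖g‖ ^ 2 + u ^ 2)) ≤
      9 * (N * β ^ 2 * ‖W • (g + (u * G) • x)‖ ^ 2 +
        N ^ 3 * β ^ 4 * ‖x‖ ^ 2 * (W * u) ^ 2) := by
  have hN := zero_le_one.trans h.one_le_scale
  have hp : 0 ≤ N * β ^ 2 * ‖W • (g + (u * G) • x)‖ ^ 2 := by positivity
  calc _ = N * β ^ 2 * ‖x‖ * (W ^ 2 * (‖g‖ ^ 2 + u ^ 2)) := by ring
    _ ≤ N * β ^ 2 * 1 * (2 * ‖W • (g + (u * G) • x)‖ ^ 2 +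
          9 * (N ^ 2 * β ^ 2 * ‖x‖ ^ 2 * (W * u) ^ 2)) := by
        gcongr
        exact h.sq_mul_le
    _ ≤ _ := by linarith

variable [FiniteDimensional ℝ E]

/-- The flux `carlemanFlux` of `W u` for the weight `W = carlemanWeight β s ‖x‖`; this is the field
to which the divergence theorem is applied. -/
def carlemanField (A : E → E →L[ℝ] E) (β s : ℝ) (u : E → ℝ) (x : E) : E :=
  carlemanFlux (A x) (phase₁ β s ‖x‖) (phase₂ β s ‖x‖) (carlemanWeight β s ‖x‖ * u x) x
    (conjugatedGradient (fun z => carlemanWeight β s ‖z‖) (fun z => phase₁ β s ‖z‖) u x)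

theorem weighted_sq_le_sq_add_divergence_carlemanField {A : E → E →L[ℝ] E}
    {lam M β s : ℝ} {u : E → ℝ} {x : E} (hA : DifferentiableAt ℝ A x)
    (hsymm : (A x).IsSymmetric) (hbd : CoefficientBounds (A x) (fderiv ℝ A x) lam M)
    (hlam : 0 < lam) (hβ : 1 ≤ β) (hs : |s| ≤ β ^ 2) (hM : 1000 * M ^ 2 ≤ lam ^ 2 * β)
    (hx : x ≠ 0) (hx' : ‖x‖ ≤ 1 / 2) (hu : ContDiffAt ℝ 2 u x) :
    lam ^ 2 / 72 * (β ^ 2 * (‖x‖ ^ (-s - β - 1) * exp (‖x‖ ^ (-β)) ^ 2 *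
        (‖fderiv ℝ u x‖ ^ 2 + u x ^ 2))) ≤
      ‖x‖ ^ (-s) * exp (‖x‖ ^ (-β)) ^ 2 * secondOrderOperator A u x ^ 2 / 2 +
        divergence (carlemanField A β s u) x := by
  have hr : 0 < ‖x‖ := norm_pos_iff.2 hx
  have hφ := phaseBounds hβ hs hr hx'
  have hdiv := sub_le_sq_add_divergence_carlemanFlux hA.hasFDerivAt hsymm
    (hasGradientAt_comp_norm hx (hasDerivAt_carlemanWeight (β := β) (s := s) hr))
    (hasGradientAt_comp_norm hx (hasDerivAt_phase₁ hr))
    (hasGradientAt_comp_norm hx (hasDerivAt_phase₂ hr)) hu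
  have hlow := (le_carlemanRemainder_sub_carlemanLowerOrder_sq hbd hlam (by linarith) hφ hM).trans
    hdiv
  have hrec :=
    hφ.weighted_sq_le (W := carlemanWeight β s ‖x‖) (u := u x) (g := ∇ u x) (by linarith)
  have hpow : ‖x‖ ^ (-s - β - 1) * exp (‖x‖ ^ (-β)) ^ 2 =
      ‖x‖ ^ (-β) / ‖x‖ ^ 2 * ‖x‖ * carlemanWeight β s ‖x‖ ^ 2 := by
    rw [carlemanWeight_sq hr, rpow_sub_one hr.ne', sub_eq_add_neg, rpow_add hr]
    field_simp
  rw [hpow, ← carlemanWeight_sq hr, ← mul_pow, show ‖fderiv ℝ u x‖ = ‖∇ u x‖ by simp [gradient]]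
  refine le_trans ?_ hlow
  rw [conjugatedGradient]
  nlinarith [mul_le_mul_of_nonneg_left hrec (by positivity : 0 ≤ lam ^ 2 / 72)]

end Pointwise

section Integration

variable {E : Type*} [NormedAddCommGroup E] [InnerProductSpace ℝ E]

lemma contDiff_carlemanFlux {n : WithTop ℕ∞} :
    ContDiff ℝ n fun q : (E →L[ℝ] E) × ℝ × ℝ × ℝ × E × E =>
      carlemanFlux q.1 q.2.1 q.2.2.1 q.2.2.2.1 q.2.2.2.2.1 q.2.2.2.2.2 := by
  have hA : ContDiff ℝ n fun q : (E →L[ℝ] E) × ℝ × ℝ × ℝ × E × E => q.1 := by fun_prop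
  have hx : ContDiff ℝ n fun q : (E →L[ℝ] E) × ℝ × ℝ × ℝ × E × E => q.2.2.2.2.1 := by fun_prop
  have hp : ContDiff ℝ n fun q : (E →L[ℝ] E) × ℝ × ℝ × ℝ × E × E => q.2.2.2.2.2 := by fun_prop
  have hxx := hx.inner ℝ (hA.clm_apply hx)
  have hpx := hp.inner ℝ (hA.clm_apply hx)
  have hpp := hp.inner ℝ (hA.clm_apply hp)
  unfold carlemanFlux carlemanMultiplier
  fun_prop

lemma carlemanFlux_zero (A : E →L[ℝ] E) (G H : ℝ) (x : E) : carlemanFlux A G H 0 x 0 = 0 := by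
  simp [carlemanFlux, carlemanMultiplier]

variable {β s t : ℝ}

lemma contDiffAt_phase₁ {n : WithTop ℕ∞} (ht : t ≠ 0) : ContDiffAt ℝ n (phase₁ β s) t := by
  have h := contDiffAt_rpow_const_of_ne (n := n) (p := -β) ht
  exact ((contDiffAt_const.mul h).add contDiffAt_const).div (contDiffAt_id.pow 2)
    (pow_ne_zero 2 ht)

lemma contDiffAt_phase₂ {n : WithTop ℕ∞} (ht : t ≠ 0) : ContDiffAt ℝ n (phase₂ β s) t := by
  have h := contDiffAt_rpow_const_of_ne (n := n) (p := -β) ht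
  exact ((contDiffAt_const.mul h).add contDiffAt_const).div (contDiffAt_id.pow 4)
    (pow_ne_zero 4 ht)

lemma contDiffAt_carlemanWeight {n : WithTop ℕ∞} (ht : t ≠ 0) :
    ContDiffAt ℝ n (carlemanWeight β s) t :=
  (contDiffAt_rpow_const_of_ne ht).mul (contDiffAt_rpow_const_of_ne ht).exp

lemma exists_lipschitzOnWith_comp_graph {X Y : Type*} [NormedAddCommGroup X]
    [NormedSpace ℝ X] [NormedAddCommGroup Y] [NormedSpace ℝ Y] {F : Type*} [NormedAddCommGroup F]
    [NormedSpace ℝ F] {Φ : X × Y → F} {f : Y → X} {y : Y} {K : ℝ≥0} {s : Set Y}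
    (hf : LipschitzOnWith K f s) (hs : s ∈ 𝓝 y) (hΦ : ContDiffAt ℝ 1 Φ (f y, y)) :
    ∃ L, ∃ t ∈ 𝓝 y, LipschitzOnWith L (fun z => Φ (f z, z)) t := by
  obtain ⟨L, t, ht, hL⟩ := hΦ.exists_lipschitzOnWith
  have hcont : ContinuousAt (fun z => (f z, z)) y :=
    (hf.continuousOn.continuousAt hs).prodMk continuousAt_id
  exact ⟨_, s ∩ (fun z => (f z, z)) ⁻¹' t, inter_mem hs (hcont ht),
    hL.comp ((hf.prodMk LipschitzWith.id.lipschitzOnWith).mono inter_subset_left) fun z hz => hz.2⟩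

variable [FiniteDimensional ℝ E] {A : E → E →L[ℝ] E} {u : E → ℝ}

lemma support_carlemanField_subset :
    Function.support (carlemanField A β s u) ⊆ tsupport u := fun x hx => by
  contrapose! hx
  simp [carlemanField, conjugatedGradient, gradient, fderiv_of_notMem_tsupport ℝ hx,
    image_eq_zero_of_notMem_tsupport hx, carlemanFlux_zero]

lemma exists_lipschitzOnWith_carlemanField {K : ℝ≥0} {U : Set E} {x : E}
    (hA : LipschitzOnWith K A U) (hU : U ∈ 𝓝 x) (hx : x ≠ 0) (hu : ContDiffAt ℝ 2 u x) :
    ∃ L, ∃ t ∈ 𝓝 x, LipschitzOnWith L (carlemanField A β s u) t := by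
  have hnorm : ContDiffAt ℝ 1 (fun z : E => ‖z‖) x := contDiffAt_norm ℝ hx
  have hr : ‖x‖ ≠ 0 := norm_ne_zero_iff.2 hx
  have hG : ContDiffAt ℝ 1 (fun z => phase₁ β s ‖z‖) x := (contDiffAt_phase₁ hr).comp x hnorm
  have hH : ContDiffAt ℝ 1 (fun z => phase₂ β s ‖z‖) x := (contDiffAt_phase₂ hr).comp x hnorm
  have hW : ContDiffAt ℝ 1 (fun z => carlemanWeight β s ‖z‖) x :=
    (contDiffAt_carlemanWeight hr).comp x hnorm
  have hu₁ : ContDiffAt ℝ 1 u x := hu.of_le (by norm_num)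
  have hp : ContDiffAt ℝ 1 (conjugatedGradient (fun z => carlemanWeight β s ‖z‖)
      (fun z => phase₁ β s ‖z‖) u) x :=
    hW.smul ((contDiffAt_gradient hu).add ((hu₁.mul hG).smul contDiffAt_id))
  have hΦ := hG.prodMk (hH.prodMk ((hW.mul hu₁).prodMk (contDiffAt_id.prodMk hp)))
  exact exists_lipschitzOnWith_comp_graph hA hU (contDiff_carlemanFlux.contDiffAt.comp (A x, x)
    (contDiffAt_fst.prodMk (hΦ.comp (A x, x) contDiffAt_snd)))

lemma exists_lipschitzWith_carlemanField {K : ℝ≥0} {U : Set E} (hA : LipschitzOnWith K A U)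
    (hU : IsOpen U) (hu : ContDiff ℝ 2 u) (hc : HasCompactSupport u)
    (hsupp : tsupport u ⊆ U \ {0}) : ∃ L, LipschitzWith L (carlemanField A β s u) := by
  refine exists_lipschitzWith_of_hasCompactSupport (fun x => ?_)
    (hc.mono' support_carlemanField_subset)
  by_cases hx : x ∈ tsupport u
  · exact exists_lipschitzOnWith_carlemanField hA (hU.mem_nhds (hsupp hx).1) (hsupp hx).2
      hu.contDiffAt
  · refine ⟨0, (tsupport u)ᶜ, (isClosed_tsupport u).isOpen_compl.mem_nhds hx, ?_⟩
    have hzero : ∀ z ∈ (tsupport u)ᶜ, carlemanField A β s u z = 0 := fun z hz =>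
      Function.notMem_support.1 fun h => hz (support_carlemanField_subset h)
    intro y hy z hz
    simp [hzero y hy, hzero z hz]

end Integration

section Estimate

variable {E : Type*} [NormedAddCommGroup E] [InnerProductSpace ℝ E] [FiniteDimensional ℝ E]
  {A : E → E →L[ℝ] E} {u : E → ℝ} {U : Set E} {K : ℝ≥0} {β s lam M : ℝ}

lemma coefficientBounds_of_norm_le {A₀ : E →L[ℝ] E} {D : E →L[ℝ] E →L[ℝ] E} {m : ℝ}
    (hcoer : ∀ v, lam * ‖v‖ ^ 2 ≤ ⟪v, A₀ v⟫) (hA : ‖A₀‖ ≤ m) (hD : ‖D‖ ≤ m) :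
    CoefficientBounds A₀ D lam ((‖traceL E‖ + 1) * m) := by
  have hm : 0 ≤ m := (norm_nonneg _).trans hA
  have hle : m ≤ (‖traceL E‖ + 1) * m :=
    le_mul_of_one_le_left hm (le_add_of_nonneg_left (norm_nonneg (traceL E)))
  have htr {B : E →L[ℝ] E} {c : ℝ} (hB : ‖B‖ ≤ c) : |traceL E B| ≤ (‖traceL E‖ + 1) * c := by
    calc |traceL E B| ≤ ‖traceL E‖ * ‖B‖ := (traceL E).le_opNorm B
      _ ≤ (‖traceL E‖ + 1) * c := by gcongr; exact le_add_of_nonneg_right zero_le_one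
  refine ⟨hcoer, hA.trans hle, hD.trans hle, htr hA, fun v => ?_⟩
  rw [mul_assoc]
  exact htr (D.flip.le_of_opNorm_le (D.opNorm_flip.trans_le hD) v)

lemma support_secondOrderOperator_subset :
    Function.support (secondOrderOperator A u) ⊆ tsupport u := fun x hx => by
  contrapose! hx
  have hgrad : tsupport (∇ u) ⊆ tsupport u :=
    (tsupport_comp_subset (map_zero _) _).trans (tsupport_fderiv_subset ℝ)
  simp [secondOrderOperator, fderiv_of_notMem_tsupport ℝ fun h => hx (hgrad h)]

lemma continuousAt_secondOrderOperator {x : E} (hA : ContinuousAt A x)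
    (hu : ContDiffAt ℝ 2 u x) : ContinuousAt (secondOrderOperator A u) x :=
  (traceL E).continuous.continuousAt.comp
    (hA.clm_comp ((contDiffAt_gradient hu).continuousAt_fderiv (by norm_num)))

lemma exists_ball_isSymmetric_coefficientBounds {t : Set E} (hlip : LipschitzOnWith K A t)
    (ht : t ∈ 𝓝 0) (hsymm : ∀ᶠ x in 𝓝 0, (A x).IsSymmetric)
    (hell : ∀ᶠ x in 𝓝 0, ∀ v, lam * ‖v‖ ^ 2 ≤ ⟪v, A x v⟫) :
    ∃ r ∈ Ioc (0 : ℝ) (1 / 2), ∃ M, LipschitzOnWith K A (Metric.ball 0 r) ∧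
      ∀ x ∈ Metric.ball 0 r, (A x).IsSymmetric ∧ CoefficientBounds (A x) (fderiv ℝ A x) lam M := by
  obtain ⟨ρ, hρ, hball⟩ := Metric.eventually_nhds_iff_ball.1 ((hsymm.and hell).and ht)
  have hsub : Metric.ball (0 : E) (min ρ (1 / 2)) ⊆ Metric.ball 0 ρ :=
    Metric.ball_subset_ball (min_le_left _ _)
  have hA : LipschitzOnWith K A (Metric.ball 0 (min ρ (1 / 2))) :=
    hlip.mono fun x hx => (hball x (hsub hx)).2
  have hr : 0 < min ρ (1 / 2) := by positivity
  refine ⟨_, ⟨hr, min_le_right _ _⟩, (‖traceL E‖ + 1) * (‖A 0‖ + K), hA, fun x hx =>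
    ⟨(hball x (hsub hx)).1.1, coefficientBounds_of_norm_le (hball x (hsub hx)).1.2 ?_ ?_⟩⟩
  · have hx' : ‖x - 0‖ ≤ 1 := by
      rw [sub_zero]
      linarith [mem_ball_zero_iff.1 hx, min_le_right ρ (1 / 2)]
    calc ‖A x‖ ≤ ‖A 0‖ + ‖A x - A 0‖ := norm_le_norm_add_norm_sub' _ _
      _ ≤ ‖A 0‖ + K * ‖x - 0‖ := by gcongr; exact hA.norm_sub_le hx (Metric.mem_ball_self hr)
      _ ≤ ‖A 0‖ + K := by gcongr; exact mul_le_of_le_one_right K.2 hx'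
  · exact (norm_fderiv_le_of_lipschitzOn ℝ (Metric.isOpen_ball.mem_nhds hx) hA).trans
      (le_add_of_nonneg_left (norm_nonneg _))

variable [MeasurableSpace E] [BorelSpace E] (μ : Measure E) [μ.IsAddHaarMeasure]

lemma integrable_weight_mul_secondOrderOperator_sq (hA : ContinuousOn A U) (hU : IsOpen U)
    (hu : ContDiff ℝ 2 u) (hc : HasCompactSupport u) (hsupp : tsupport u ⊆ U \ {0}) :
    Integrable (fun x => ‖x‖ ^ (-s) * exp (‖x‖ ^ (-β)) ^ 2 * secondOrderOperator A u x ^ 2) μ := by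
  have hsub : Function.support (fun x => ‖x‖ ^ (-s) * exp (‖x‖ ^ (-β)) ^ 2 *
      secondOrderOperator A u x ^ 2) ⊆ tsupport u := fun x hx =>
    support_secondOrderOperator_subset (A := A) fun h => hx (by simp [h])
  refine Continuous.integrable_of_hasCompactSupport (continuous_of_tsupport fun x hx => ?_)
    (hc.mono' hsub)
  obtain ⟨hxU, hx0⟩ := hsupp (closure_minimal hsub (isClosed_tsupport u) hx)
  have hpow (q : ℝ) : ContinuousAt (fun z : E => ‖z‖ ^ q) x :=
    continuous_norm.continuousAt.rpow_const (.inl (norm_ne_zero_iff.2 hx0))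
  exact ((hpow _).mul ((hpow _).rexp.pow 2)).mul
    ((continuousAt_secondOrderOperator (hA.continuousAt (hU.mem_nhds hxU)) hu.contDiffAt).pow 2)

theorem sq_mul_integral_le_of_coefficientBounds (hA : LipschitzOnWith K A U) (hU : IsOpen U)
    (hU' : U ⊆ Metric.closedBall 0 (1 / 2)) (hsymm : ∀ x ∈ U, (A x).IsSymmetric)
    (hbd : ∀ x ∈ U, CoefficientBounds (A x) (fderiv ℝ A x) lam M)
    (hlam : 0 < lam) (hβ : 1 ≤ β) (hs : |s| ≤ β ^ 2) (hM : 1000 * M ^ 2 ≤ lam ^ 2 * β)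
    (hu : ContDiff ℝ 2 u) (hc : HasCompactSupport u) (hsupp : tsupport u ⊆ U \ {0}) :
    β ^ 2 * ∫ x, ‖x‖ ^ (-s - β - 1) * exp (‖x‖ ^ (-β)) ^ 2 * (‖fderiv ℝ u x‖ ^ 2 + u x ^ 2) ∂μ ≤
      36 / lam ^ 2 *
        ∫ x, ‖x‖ ^ (-s) * exp (‖x‖ ^ (-β)) ^ 2 * secondOrderOperator A u x ^ 2 ∂μ := by
  obtain ⟨L, hL⟩ := exists_lipschitzWith_carlemanField (β := β) (s := s) hA hU hu hc hsupp
  obtain ⟨hdiv, hdiv0⟩ := integrable_divergence_and_integral_eq_zero (μ := μ) hL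
    (hc.mono' support_carlemanField_subset)
  have hint := (integrable_weight_mul_secondOrderOperator_sq (β := β) (s := s) μ hA.continuousOn hU
    hu hc hsupp).div_const 2
  have hpoint : ∀ᵐ x ∂μ, lam ^ 2 / 72 * (β ^ 2 * (‖x‖ ^ (-s - β - 1) * exp (‖x‖ ^ (-β)) ^ 2 *
        (‖fderiv ℝ u x‖ ^ 2 + u x ^ 2))) ≤
      ‖x‖ ^ (-s) * exp (‖x‖ ^ (-β)) ^ 2 * secondOrderOperator A u x ^ 2 / 2 +
        divergence (carlemanField A β s u) x := by
    filter_upwards [hA.ae_differentiableWithinAt_of_mem] with x hdiff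
    by_cases hx : x ∈ tsupport u
    · obtain ⟨hxU, hx0⟩ := hsupp hx
      exact weighted_sq_le_sq_add_divergence_carlemanField
        ((hdiff hxU).differentiableAt (hU.mem_nhds hxU)) (hsymm x hxU) (hbd x hxU) hlam hβ hs hM
        hx0 (mem_closedBall_zero_iff.1 (hU' hxU)) hu.contDiffAt
    · rw [fderiv_of_notMem_tsupport ℝ hx, image_eq_zero_of_notMem_tsupport hx,
        divergence_eq_zero_of_notMem_tsupport fun h =>
          hx (closure_minimal support_carlemanField_subset (isClosed_tsupport u) h)]
      simp only [norm_zero, zero_pow two_ne_zero, add_zero, mul_zero]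
      positivity
  have hle := integral_mono_of_nonneg (ae_of_all μ fun x => by positivity) (hint.add hdiv) hpoint
  simp only [Pi.add_apply] at hle
  rw [integral_const_mul, integral_const_mul, integral_add hint hdiv, hdiv0, integral_div,
    add_zero] at hle
  rw [div_mul_eq_mul_div, le_div_iff₀ (by positivity)]
  linarith

theorem carleman_estimate_second_order_general {t : Set E} (hlip : LipschitzOnWith K A t)
    (ht : t ∈ 𝓝 0) (hsymm : ∀ᶠ x in 𝓝 0, (A x).IsSymmetric) (hlam : 0 < lam)
    (hell : ∀ᶠ x in 𝓝 0, ∀ v, lam * ‖v‖ ^ 2 ≤ ⟪v, A x v⟫) (s₀ c : ℝ) :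
    ∃ β₀ : ℝ, 1 ≤ β₀ ∧ ∃ r₀ ∈ Ioo (0 : ℝ) 1, ∃ C : ℝ, 0 < C ∧ ∀ β : ℝ, β₀ ≤ β →
      ∀ u : E → ℝ, ContDiff ℝ 2 u → HasCompactSupport u →
        tsupport u ⊆ Metric.ball 0 r₀ \ {0} →
        β ^ 2 * ∫ x, ‖x‖ ^ (-(s₀ + c * β) - β - 1) * exp (‖x‖ ^ (-β)) ^ 2 *
            (‖fderiv ℝ u x‖ ^ 2 + u x ^ 2) ∂μ
          ≤ C * ∫ x, ‖x‖ ^ (-(s₀ + c * β)) * exp (‖x‖ ^ (-β)) ^ 2 *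
            secondOrderOperator A u x ^ 2 ∂μ := by
  obtain ⟨r₀, ⟨hr₀, hr₀'⟩, M, hA, hbd⟩ :=
    exists_ball_isSymmetric_coefficientBounds hlip ht hsymm hell
  refine ⟨max 1 (max (|s₀| + |c|) (1000 * M ^ 2 / lam ^ 2)), le_max_left _ _, r₀,
    ⟨hr₀, by linarith⟩, 36 / lam ^ 2, by positivity,
    fun β hβ u hu hc hsupp => ?_⟩
  obtain ⟨hβ₁, hβs, hβM⟩ : 1 ≤ β ∧ |s₀| + |c| ≤ β ∧ 1000 * M ^ 2 / lam ^ 2 ≤ β := by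
    simpa only [max_le_iff] using hβ
  have hs : |s₀ + c * β| ≤ β ^ 2 := by
    calc |s₀ + c * β| ≤ |s₀| + |c| * |β| := (abs_add_le _ _).trans_eq (by rw [abs_mul])
      _ ≤ |s₀| * β + |c| * β := by
        rw [abs_of_pos (by positivity : 0 < β)]
        gcongr
        exact le_mul_of_one_le_right (abs_nonneg _) hβ₁
      _ ≤ β ^ 2 := by nlinarith
  exact sq_mul_integral_le_of_coefficientBounds μ hA Metric.isOpen_ball
    (Metric.ball_subset_closedBall.trans (Metric.closedBall_subset_closedBall hr₀'))
    (fun x hx => (hbd x hx).1) (fun x hx => (hbd x hx).2) hlam hβ₁ hs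
    ((div_le_iff₀' (by positivity)).1 hβM) hu hc hsupp

end Estimate

lemma locallyLipschitz_pi {α ι : Type*} [PseudoEMetricSpace α] [Fintype ι] {X : ι → Type*}
    [∀ i, PseudoEMetricSpace (X i)] {f : α → ∀ i, X i}
    (hf : ∀ i, LocallyLipschitz fun x => f x i) : LocallyLipschitz f := fun x => by
  choose K t ht hK using fun i => hf i x
  refine ⟨Finset.univ.sup K, ⋂ i, t i, Filter.iInter_mem.2 ht, fun y hy z hz =>
    edist_pi_le_iff.2 fun i => (hK i (mem_iInter.1 hy i) (mem_iInter.1 hz i)).trans ?_⟩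
  gcongr
  exact Finset.le_sup (Finset.mem_univ i)

section Coordinates

variable {ι : Type*} [Fintype ι] [DecidableEq ι] {a : ι → ι → EuclideanSpace ℝ ι → ℝ}

/-- The coefficient matrix `(a_{jk}(x))` as an endomorphism of Euclidean space. -/
def coefficientMap (a : ι → ι → EuclideanSpace ℝ ι → ℝ) (x : EuclideanSpace ℝ ι) :
    EuclideanSpace ℝ ι →L[ℝ] EuclideanSpace ℝ ι :=
  Matrix.toEuclideanCLM (𝕜 := ℝ) (Matrix.of fun j k => a j k x)

lemma isSymmetric_coefficientMap (ha : ∀ j k, a j k = a k j) (x : EuclideanSpace ℝ ι) :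
    (coefficientMap a x).IsSymmetric :=
  Matrix.isSymmetric_toEuclideanLin_iff.2 <| Matrix.IsHermitian.ext fun j k => by
    simp [ha j k]

lemma inner_coefficientMap (x v w : EuclideanSpace ℝ ι) :
    ⟪v, coefficientMap a x w⟫ = ∑ j, ∑ k, a j k x * v j * w k := by
  rw [coefficientMap, Matrix.inner_toEuclideanCLM, dotProduct]
  simp only [Matrix.mulVec, dotProduct, Matrix.of_apply, Finset.mul_sum]
  exact Finset.sum_congr rfl fun j _ => Finset.sum_congr rfl fun k _ => by ring

lemma locallyLipschitz_coefficientMap (ha : ∀ j k, LocallyLipschitz (a j k)) :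
    LocallyLipschitz (coefficientMap a) := by
  let L : (ι → ι → ℝ) →ₗ[ℝ] (EuclideanSpace ℝ ι →L[ℝ] EuclideanSpace ℝ ι) :=
    (Matrix.toEuclideanCLM (n := ι) (𝕜 := ℝ)).toAlgEquiv.toLinearMap ∘ₗ
      (Matrix.ofLinearEquiv ℝ).toLinearMap
  exact L.toContinuousLinearMap.lipschitz.locallyLipschitz.comp
    (locallyLipschitz_pi fun j => locallyLipschitz_pi fun k => ha j k)

lemma secondOrderOperator_coefficientMap {u : EuclideanSpace ℝ ι → ℝ} {x : EuclideanSpace ℝ ι}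
    (hu : ContDiffAt ℝ 2 u x) :
    secondOrderOperator (coefficientMap a) u x = ∑ j, ∑ k, a j k x *
      fderiv ℝ (fun y => fderiv ℝ u y (EuclideanSpace.single j 1)) x
        (EuclideanSpace.single k 1) := by
  have hdiff : DifferentiableAt ℝ (fderiv ℝ u) x :=
    (hu.fderiv_right (m := 1) (by norm_num)).differentiableAt (by norm_num)
  rw [secondOrderOperator, traceL_apply,
    LinearMap.trace_eq_sum_inner _ (EuclideanSpace.basisFun ι ℝ)]
  refine Finset.sum_congr rfl fun j _ => ?_
  have hentry (k : ι) : (fderiv ℝ (∇ u) x (EuclideanSpace.single j 1)) k =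
      fderiv ℝ (fun y => fderiv ℝ u y (EuclideanSpace.single j 1)) x
        (EuclideanSpace.single k 1) := by
    rw [fderiv_clm_apply hdiff (differentiableAt_const _)]
    calc _ = ⟪fderiv ℝ (∇ u) x (EuclideanSpace.single j 1), EuclideanSpace.single k 1⟫ := by
          simp [EuclideanSpace.inner_single_right]
      _ = ⟪fderiv ℝ (∇ u) x (EuclideanSpace.single k 1), EuclideanSpace.single j 1⟫ :=
          (isSymmetric_fderiv_gradient hu _ _).trans (real_inner_comm _ _)
      _ = _ := by simp [inner_fderiv_gradient]
  simp_rw [EuclideanSpace.basisFun_apply, ContinuousLinearMap.coe_coe,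
    ContinuousLinearMap.comp_apply, inner_coefficientMap, hentry]
  simp
end Coordinates

end Carleman

/-- Carleman estimate for a second-order uniformly elliptic operator
`A = ∑ a_{jk} ∂²_{jk}` with symmetric, locally Lipschitz (`W^{1,∞}_loc`) coefficients:
for all `s₀, c̃` there are `β₀ ≥ 1`, `r₀ ∈ (0,1)` and `C > 0` such that, for `β ≥ β₀`,
`s = s₀ + c̃ β`, `r = |x|`, `ψ = exp(r^{-β})`, and every
`u ∈ C_c^∞(B_{r₀} ∖ {0})`,
`β² ∫ r^{-s-β-1} ψ² (|∇u|² + |u|²) ≤ C ∫ r^{-s} ψ² |Au|²`. -/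
theorem carleman_estimate_second_order
    (a : Fin 3 → Fin 3 → EuclideanSpace ℝ (Fin 3) → ℝ)
    (hsym : ∀ j k, a j k = a k j)
    (hlip : ∀ j k, LocallyLipschitz (a j k))
    (lam : ℝ) (hlam : 0 < lam)
    (hell : ∀ x : EuclideanSpace ℝ (Fin 3), ∀ ξ : Fin 3 → ℝ,
      lam * ∑ j, (ξ j) ^ 2 ≤ ∑ j, ∑ k, a j k x * ξ j * ξ k)
    (s₀ ctilde : ℝ) :
    ∃ β₀ : ℝ, 1 ≤ β₀ ∧ ∃ r₀ ∈ Ioo (0 : ℝ) 1, ∃ C : ℝ, 0 < C ∧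
      ∀ β : ℝ, β₀ ≤ β →
      ∀ u : EuclideanSpace ℝ (Fin 3) → ℝ, ContDiff ℝ (⊤ : ℕ∞) u →
        HasCompactSupport u →
        tsupport u ⊆ Metric.ball (0 : EuclideanSpace ℝ (Fin 3)) r₀ \ {0} →
        β ^ 2 * ∫ x : EuclideanSpace ℝ (Fin 3),
            ‖x‖ ^ (-(s₀ + ctilde * β) - β - 1) * Real.exp (‖x‖ ^ (-β)) ^ 2 *
              (‖fderiv ℝ u x‖ ^ 2 + u x ^ 2)
        ≤ C * ∫ x : EuclideanSpace ℝ (Fin 3),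
            ‖x‖ ^ (-(s₀ + ctilde * β)) * Real.exp (‖x‖ ^ (-β)) ^ 2 *
              (∑ j, ∑ k, a j k x * pd2 u x j k) ^ 2 := by
  obtain ⟨K, t, ht, hK⟩ := locallyLipschitz_coefficientMap hlip 0
  have hcoer (x v : EuclideanSpace ℝ (Fin 3)) :
      lam * ‖v‖ ^ 2 ≤ inner ℝ v (coefficientMap a x v) := by
    rw [EuclideanSpace.real_norm_sq_eq, inner_coefficientMap]
    exact hell x v
  obtain ⟨β₀, hβ₀, r₀, hr₀, C, hC, h⟩ := carleman_estimate_second_order_general volume hK ht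
    (.of_forall (isSymmetric_coefficientMap hsym)) hlam (.of_forall hcoer) s₀ ctilde
  refine ⟨β₀, hβ₀, r₀, hr₀, C, hC, fun β hβ u hu hc hsupp => ?_⟩
  have hu₂ : ContDiff ℝ 2 u := contDiff_infty.1 hu 2
  have hop (x : EuclideanSpace ℝ (Fin 3)) :=
    secondOrderOperator_coefficientMap (a := a) (hu₂.contDiffAt (x := x))
  simpa only [hop, pd2, e3] using h β hβ u hu₂ hc hsupp
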